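/- arXiv:1610.02446 — 2 statements merged into one kernel-verified Lean document; each statement's English description precedes it below -/
import Mathlib

section
/- For every σ ∈ [1/4, 1/3] there exists a graphon W with co-cherry density d₁(W) = h_{A,1}(σ) and triangle density d₃(W) = h_{A,3}(σ). -/
/-!
The densities are attained by the step graphon with four blocks of lengths `σ, σ, 1/2 - σ, 1/2 - σ`:
it is `1` on the diagonal blocks, equals `δ = (4σ-1)/((1-2σ)√(5-12σ))` between the last two blocks,
and is `0` elsewhere. One has `δ ∈ [0,1]` because `√(5-12σ) ≥ 1` and `4σ-1 ≤ 1-2σ` for `σ ≤ 1/3`.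

Since the graphon factors through the map `stepIndex` sending a point to its block, integrating over
`[0,1]` amounts to a weighted sum over the four blocks (`integral_stepIndex`). The densities are
therefore polynomials in `σ` and `δ`, and the relation `√(5-12σ)² = 5-12σ` turns them into
`hA1 σ` and `hA3 σ`.
-/

open MeasureTheory Real

/-- A graphon: a symmetric measurable function `W : ℝ → ℝ → ℝ` taking values in `[0,1]`
(only its values on `[0,1]²` matter). -/
structure Graphon where
  W : ℝ → ℝ → ℝ
  measurable : Measurable (Function.uncurry W)
  mem_Icc : ∀ x y, W x y ∈ Set.Icc (0 : ℝ) 1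
  symm : ∀ x y, W x y = W y x

/-- Density of the empty 3-vertex graph (co-triangle). -/
noncomputable def d0 (G : Graphon) : ℝ :=
  ∫ x in Set.Icc (0 : ℝ) 1, ∫ y in Set.Icc (0 : ℝ) 1, ∫ z in Set.Icc (0 : ℝ) 1,
    (1 - G.W x y) * (1 - G.W y z) * (1 - G.W x z)

/-- Density of the one-edge 3-vertex graph (co-cherry). -/
noncomputable def d1 (G : Graphon) : ℝ :=
  3 * ∫ x in Set.Icc (0 : ℝ) 1, ∫ y in Set.Icc (0 : ℝ) 1, ∫ z in Set.Icc (0 : ℝ) 1,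
    G.W x y * (1 - G.W y z) * (1 - G.W x z)

/-- Density of the two-edge 3-vertex graph (cherry). -/
noncomputable def d2 (G : Graphon) : ℝ :=
  3 * ∫ x in Set.Icc (0 : ℝ) 1, ∫ y in Set.Icc (0 : ℝ) 1, ∫ z in Set.Icc (0 : ℝ) 1,
    G.W x y * G.W x z * (1 - G.W y z)

/-- Triangle density. -/
noncomputable def d3 (G : Graphon) : ℝ :=
  ∫ x in Set.Icc (0 : ℝ) 1, ∫ y in Set.Icc (0 : ℝ) 1, ∫ z in Set.Icc (0 : ℝ) 1,
    G.W x y * G.W y z * G.W x z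

/-- Edge density. -/
noncomputable def dE (G : Graphon) : ℝ :=
  ∫ x in Set.Icc (0 : ℝ) 1, ∫ y in Set.Icc (0 : ℝ) 1, G.W x y

/-- Degree of a vertex `x` in a graphon. -/
noncomputable def deg (G : Graphon) (x : ℝ) : ℝ :=
  ∫ y in Set.Icc (0 : ℝ) 1, G.W x y

noncomputable def hA1 (σ : ℝ) : ℝ :=
  (9 - 48 * σ + 114 * σ ^ 2 - 120 * σ ^ 3
      + 3 * (1 - 2 * σ) * (4 * σ - 1) ^ 2 * Real.sqrt (5 - 12 * σ)) / (10 - 24 * σ)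

noncomputable def hA3 (σ : ℝ) : ℝ :=
  (2 - 18 * σ + 57 * σ ^ 2 - 60 * σ ^ 3) / (5 - 12 * σ)

def hB1 (σ : ℝ) : ℝ := 6 * σ - 18 * σ ^ 2 + 18 * σ ^ 3

def hB3 (σ : ℝ) : ℝ := 1 - 6 * σ + 12 * σ ^ 2 - 6 * σ ^ 3

/-- The objective function of the optimization problem from Proposition 10. -/
def F (α x1 x2 x3 y1 y2 y3 : ℝ) : ℝ :=
  (x1 ^ 3 * (3 - α - 3 * (3 - α) * y1 - 3 * (α - 1) * y1 ^ 2) + 3 * x1 ^ 2 * y1) +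
  (x2 ^ 3 * (3 - α - 3 * (3 - α) * y2 - 3 * (α - 1) * y2 ^ 2) + 3 * x2 ^ 2 * y2) +
  (x3 ^ 3 * (3 - α - 3 * (3 - α) * y3 - 3 * (α - 1) * y3 ^ 2) + 3 * x3 ^ 2 * y3)

/-- The block containing `x`, for the partition of the line at `σ`, `2σ` and `1/2 + σ`. -/
noncomputable def stepIndex (σ x : ℝ) : Fin 4 :=
  if x < σ then 0 else if x < 2 * σ then 1 else if x < 1 / 2 + σ then 2 else 3

/-- The lengths of the four blocks within `[0,1]`. -/
noncomputable def stepWeight (σ : ℝ) : Fin 4 → ℝ := ![σ, σ, 1 / 2 - σ, 1 / 2 - σ]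

/-- The edge densities between the blocks: four cliques, the last two of which are joined by a
bipartite graph of density `δ`. -/
noncomputable def stepMatrix (δ : ℝ) : Fin 4 → Fin 4 → ℝ :=
  ![![1, 0, 0, 0], ![0, 1, 0, 0], ![0, 0, 1, δ], ![0, 0, δ, 1]]

lemma measurable_stepIndex (σ : ℝ) : Measurable (stepIndex σ) := by
  unfold stepIndex
  refine Measurable.ite measurableSet_Iio measurable_const ?_
  refine Measurable.ite measurableSet_Iio measurable_const ?_
  exact Measurable.ite measurableSet_Iio measurable_const measurable_const

lemma measureReal_stepIndex {σ : ℝ} (h1 : 1 / 4 ≤ σ) (h2 : σ ≤ 1 / 3) (i : Fin 4) :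
    (volume.restrict (Set.Icc (0 : ℝ) 1)).real (stepIndex σ ⁻¹' {i}) = stepWeight σ i := by
  rw [measureReal_restrict_apply (measurable_stepIndex σ (measurableSet_singleton i))]
  have key : ∀ S : Set ℝ, (∀ x, x ∈ S ↔ (stepIndex σ x = i ∧ 0 ≤ x ∧ x ≤ 1)) →
      stepIndex σ ⁻¹' {i} ∩ Set.Icc 0 1 = S := by
    intro S hS
    ext x
    rw [hS]
    simp
  fin_cases i
  · rw [key (Set.Ico 0 σ)]
    · rw [Real.volume_real_Ico_of_le (by linarith)]
      simp [stepWeight]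
    · intro x
      simp only [stepIndex, Set.mem_Ico]
      grind
  · rw [key (Set.Ico σ (2 * σ))]
    · rw [Real.volume_real_Ico_of_le (by linarith)]
      simp [stepWeight]
      ring
    · intro x
      simp only [stepIndex, Set.mem_Ico]
      grind
  · rw [key (Set.Ico (2 * σ) (1 / 2 + σ))]
    · rw [Real.volume_real_Ico_of_le (by linarith)]
      simp [stepWeight]
      ring
    · intro x
      simp only [stepIndex, Set.mem_Ico]
      grind
  · rw [key (Set.Icc (1 / 2 + σ) 1)]
    · rw [Real.volume_real_Icc_of_le (by linarith)]
      simp [stepWeight]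
      ring
    · intro x
      simp only [stepIndex, Set.mem_Icc]
      grind

lemma integral_stepIndex {σ : ℝ} (h1 : 1 / 4 ≤ σ) (h2 : σ ≤ 1 / 3) (f : Fin 4 → ℝ) :
    ∫ x in Set.Icc (0 : ℝ) 1, f (stepIndex σ x) = ∑ i, stepWeight σ i * f i := by
  have hm := measurable_stepIndex σ
  rw [← integral_map (φ := stepIndex σ) (f := f) hm.aemeasurable
    (measurable_of_finite f).aestronglyMeasurable]
  have : IsFiniteMeasure (Measure.map (stepIndex σ) (volume.restrict (Set.Icc (0 : ℝ) 1))) :=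
    Measure.isFiniteMeasure_map _ _
  rw [integral_fintype Integrable.of_finite]
  refine Finset.sum_congr rfl fun i _ => ?_
  rw [map_measureReal_apply hm (measurableSet_singleton i), measureReal_stepIndex h1 h2, smul_eq_mul]

lemma integral_stepIndex_triple {σ : ℝ} (h1 : 1 / 4 ≤ σ) (h2 : σ ≤ 1 / 3)
    (f : Fin 4 → Fin 4 → Fin 4 → ℝ) :
    ∫ x in Set.Icc (0 : ℝ) 1, ∫ y in Set.Icc (0 : ℝ) 1, ∫ z in Set.Icc (0 : ℝ) 1,
      f (stepIndex σ x) (stepIndex σ y) (stepIndex σ z) =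
    ∑ i, stepWeight σ i * ∑ j, stepWeight σ j * ∑ k, stepWeight σ k * f i j k := by
  have hz : ∀ i j, ∫ z in Set.Icc (0 : ℝ) 1, f i j (stepIndex σ z) =
      ∑ k, stepWeight σ k * f i j k := fun i j => integral_stepIndex h1 h2 (f i j)
  have hy : ∀ i, ∫ y in Set.Icc (0 : ℝ) 1, ∑ k, stepWeight σ k * f i (stepIndex σ y) k =
      ∑ j, stepWeight σ j * ∑ k, stepWeight σ k * f i j k :=
    fun i => integral_stepIndex h1 h2 fun j => ∑ k, stepWeight σ k * f i j k
  simp only [hz, hy]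
  exact integral_stepIndex h1 h2 fun i => ∑ j, stepWeight σ j * ∑ k, stepWeight σ k * f i j k

/-- The step graphon with blocks given by `stepIndex σ` and edge densities `stepMatrix δ`. -/
noncomputable def stepGraphon (σ δ : ℝ) (h0 : 0 ≤ δ) (h1 : δ ≤ 1) : Graphon where
  W x y := stepMatrix δ (stepIndex σ x) (stepIndex σ y)
  measurable := by
    have hm := measurable_stepIndex σ
    exact (measurable_of_finite fun p : Fin 4 × Fin 4 => stepMatrix δ p.1 p.2).comp
      ((hm.comp measurable_fst).prodMk (hm.comp measurable_snd))
  mem_Icc x y := by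
    generalize stepIndex σ x = i
    generalize stepIndex σ y = j
    fin_cases i <;> fin_cases j <;> simp [stepMatrix, h0, h1]
  symm x y := by
    generalize stepIndex σ x = i
    generalize stepIndex σ y = j
    fin_cases i <;> fin_cases j <;> simp [stepMatrix]

theorem hA_densities_attained (σ : ℝ) (hσ : σ ∈ Set.Icc (1 / 4 : ℝ) (1 / 3)) :
    ∃ G : Graphon, d1 G = hA1 σ ∧ d3 G = hA3 σ := by
  obtain ⟨h1, h2⟩ := hσ
  set s := √(5 - 12 * σ) with hs
  have hs2 : s ^ 2 = 5 - 12 * σ := Real.sq_sqrt (by linarith)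
  have hs1 : 1 ≤ s := Real.one_le_sqrt.mpr (by linarith)
  have ht : 0 < 1 - 2 * σ := by linarith
  have hts : 0 < (1 - 2 * σ) * s := by positivity
  obtain ⟨δ, hδ⟩ : ∃ δ, δ = (4 * σ - 1) / ((1 - 2 * σ) * s) := ⟨_, rfl⟩
  have hδ0 : 0 ≤ δ := hδ ▸ div_nonneg (by linarith) hts.le
  have hδ1 : δ ≤ 1 := by
    rw [hδ, div_le_one hts]
    nlinarith
  -- The relation defining `δ`, and the two consequences by which `δ` is eliminated.
  have e0 : δ * (1 - 2 * σ) * s = 4 * σ - 1 := by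
    rw [mul_assoc, hδ]
    exact div_mul_cancel₀ _ hts.ne'
  have e1 : δ * (1 - 2 * σ) * (5 - 12 * σ) = (4 * σ - 1) * s := by
    rw [← hs2, ← e0]
    ring
  have e2 : δ ^ 2 * (1 - 2 * σ) ^ 2 * (5 - 12 * σ) = (4 * σ - 1) ^ 2 := by
    rw [← hs2, ← e0]
    ring
  refine ⟨stepGraphon σ δ hδ0 hδ1, ?_, ?_⟩
  · unfold d1 hA1
    rw [eq_div_iff (by linarith), ← hs]
    simp only [stepGraphon]
    rw [integral_stepIndex_triple h1 h2
      fun i j k => stepMatrix δ i j * (1 - stepMatrix δ j k) * (1 - stepMatrix δ i k)]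
    simp [Fin.sum_univ_four, stepMatrix, stepWeight]
    linear_combination (3 * (1 - 2 * σ) * (4 * σ - 1)) * e1 + (3 / 2 * (1 - 2 * σ)) * e2
  · unfold d3 hA3
    rw [eq_div_iff (by linarith)]
    simp only [stepGraphon]
    rw [integral_stepIndex_triple h1 h2
      fun i j k => stepMatrix δ i j * stepMatrix δ j k * stepMatrix δ i k]
    simp [Fin.sum_univ_four, stepMatrix, stepWeight]
    linear_combination (3 / 4 * (1 - 2 * σ)) * e2
end

section
/- For every σ ∈ [1/3, 1/2] there exists a graphon W with co-cherry density d₁(W) = h_{B,1}(σ) and triangle density d₃(W) = h_{B,3}(σ). -/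
/-!
The graphon is the one of three disjoint cliques: colour `[0,1]` with three colours, the classes
having measures `σ`, `σ` and `1 - 2σ`, and put `W x y = 1` when `x` and `y` share a colour and
`W x y = 0` otherwise. An integral over `[0,1]` of a function of the colour is a weighted sum of
three terms (`integral_blockColor`). Applying this to each of the three iterated integrals turns
both densities into finite sums, which are the polynomials `hB1 σ` and `hB3 σ`.
-/

open MeasureTheory Real

/-- The colour of a point: `[0,σ]`, `(σ,2σ]` and `(2σ,1]` are the three colour classes. -/
noncomputable def blockColor (σ x : ℝ) : Fin 3 :=
  if x ≤ σ then 0 else if x ≤ 2 * σ then 1 else 2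

/-- The average of a function of the colour, colours `0`, `1`, `2` having weights `σ`, `σ` and
`1 - 2σ`. -/
def colorMean (σ : ℝ) (f : Fin 3 → ℝ) : ℝ := σ * f 0 + σ * f 1 + (1 - 2 * σ) * f 2

lemma measurable_blockColor (σ : ℝ) : Measurable (blockColor σ) :=
  Measurable.ite measurableSet_Iic measurable_const
    (Measurable.ite measurableSet_Iic measurable_const measurable_const)

lemma integral_indicator_Iic (a : ℝ) (h0 : 0 ≤ a) (h1 : a ≤ 1) (k : ℝ) :
    ∫ x in Set.Icc (0 : ℝ) 1, (Set.Iic a).indicator (fun _ => k) x = a * k := by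
  have hset : Set.Icc (0 : ℝ) 1 ∩ Set.Iic a = Set.Icc 0 a := by
    ext x
    simp only [Set.mem_inter_iff, Set.mem_Icc, Set.mem_Iic]
    constructor
    · rintro ⟨⟨h, _⟩, h'⟩
      exact ⟨h, h'⟩
    · rintro ⟨h, h'⟩
      exact ⟨⟨h, h'.trans h1⟩, h'⟩
  rw [setIntegral_indicator measurableSet_Iic, hset]
  simp [h0]

lemma integral_blockColor {σ : ℝ} (h0 : 0 ≤ σ) (h1 : 2 * σ ≤ 1) (f : Fin 3 → ℝ) :
    ∫ x in Set.Icc (0 : ℝ) 1, f (blockColor σ x) = colorMean σ f := by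
  -- Write the step function as a combination of indicators of the nested half-lines.
  have hstep : ∀ x, f (blockColor σ x) =
      f 2 + ((Set.Iic (2 * σ)).indicator (fun _ => f 1 - f 2) x
        + (Set.Iic σ).indicator (fun _ => f 0 - f 1) x) := by
    intro x
    by_cases hx : x ≤ σ
    · have hx2 : x ≤ 2 * σ := by linarith
      simp [blockColor, hx, hx2]
    · by_cases hx2 : x ≤ 2 * σ <;> simp [blockColor, hx, hx2]
  have hint : ∀ a k : ℝ, Integrable ((Set.Iic a).indicator fun _ => k)
      (volume.restrict (Set.Icc (0 : ℝ) 1)) := fun a k =>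
    (integrable_const k).indicator measurableSet_Iic
  simp_rw [hstep]
  rw [integral_add (integrable_const _) (by exact (hint _ _).add (hint _ _)),
    integral_add (hint _ _) (hint _ _),
    integral_indicator_Iic _ (by linarith) h1, integral_indicator_Iic _ h0 (by linarith)]
  simp [colorMean]
  ring

/-- The graphon of three disjoint cliques on the colour classes of `blockColor σ`. -/
noncomputable def cliqueGraphon (σ : ℝ) : Graphon where
  W x y := if blockColor σ x = blockColor σ y then 1 else 0
  measurable := by
    refine Measurable.ite ?_ measurable_const measurable_const
    exact measurableSet_eq_fun ((measurable_blockColor σ).comp measurable_fst)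
      ((measurable_blockColor σ).comp measurable_snd)
  mem_Icc x y := by split_ifs <;> simp
  symm x y := by simp only [eq_comm]

lemma integral_blockColor_triple {σ : ℝ} (h0 : 0 ≤ σ) (h1 : 2 * σ ≤ 1)
    (g : Fin 3 → Fin 3 → Fin 3 → ℝ) :
    ∫ x in Set.Icc (0 : ℝ) 1, ∫ y in Set.Icc (0 : ℝ) 1, ∫ z in Set.Icc (0 : ℝ) 1,
      g (blockColor σ x) (blockColor σ y) (blockColor σ z) =
    colorMean σ fun i => colorMean σ fun j => colorMean σ fun k => g i j k := by
  set m := colorMean σ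
  have hm : ∀ f : Fin 3 → ℝ, ∫ x in Set.Icc (0 : ℝ) 1, f (blockColor σ x) = m f :=
    integral_blockColor h0 h1
  have hz : ∀ x y, ∫ z in Set.Icc (0 : ℝ) 1,
      g (blockColor σ x) (blockColor σ y) (blockColor σ z)
        = m (g (blockColor σ x) (blockColor σ y)) := fun x y => hm _
  have hy : ∀ x, ∫ y in Set.Icc (0 : ℝ) 1, m (g (blockColor σ x) (blockColor σ y))
      = m fun j => m (g (blockColor σ x) j) := fun x => hm fun j => m (g (blockColor σ x) j)
  simp_rw [hz, hy]
  exact hm fun i => m fun j => m (g i j)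

theorem hB_densities_attained (σ : ℝ) (hσ : σ ∈ Set.Icc (1 / 3 : ℝ) (1 / 2)) :
    ∃ G : Graphon, d1 G = hB1 σ ∧ d3 G = hB3 σ := by
  have h0 : 0 ≤ σ := by linarith [hσ.1]
  have h1 : 2 * σ ≤ 1 := by linarith [hσ.2]
  let w : Fin 3 → Fin 3 → ℝ := fun i j => if i = j then 1 else 0
  refine ⟨cliqueGraphon σ, ?_, ?_⟩
  · have h := integral_blockColor_triple h0 h1 fun i j k => w i j * (1 - w j k) * (1 - w i k)
    refine (congrArg (3 * ·) h).trans ?_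
    simp [w, colorMean, hB1]
    ring
  · have h := integral_blockColor_triple h0 h1 fun i j k => w i j * w j k * w i k
    refine h.trans ?_
    simp [w, colorMean, hB3]
    ring
end
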